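/- arXiv:1303.1770 — 3 statements merged into one kernel-verified Lean document; each statement's English description precedes it below -/
import Mathlib

section
/- Let E be a positive sesquilinear form valued measure with form domain 𝒱 ⊆ H, f : Ω → ℂ measurable, and D_s ⊆ 𝒱 a linear subspace dense in H such that f is E_{ψ,φ}-integrable for all ψ, φ ∈ D_s. Then D'' := {φ ∈ D_s : the functional D_s ∋ ψ ↦ ∫ f dE_{ψ,φ} is bounded} is a linear subspace of H, and there is a unique linear operator L'' : D'' → H with ⟨ψ, L''φ⟩ = ∫ f dE_{ψ,φ} for all ψ ∈ D_s and φ ∈ D''. Moreover, D'' is contained in W := {φ ∈ 𝒱 : f is E_{ψ,φ}-integrable for all ψ ∈ D_s and ψ ↦ ∫ f dE_{ψ,φ} is bounded on D_s}, and L'' is the restriction to D'' of the operator L_{D_s} on W determined by the same formula. If f is real valued, then L'' is symmetric: ⟨L''ψ, φ⟩ = ⟨ψ, L''φ⟩ for all ψ, φ ∈ D''. -/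
/-!
The integral `∫ f dν` is linear in the complex measure `ν` along measures for which `f` is
integrable: for signed measures, `s + t` and the sum of the Jordan decompositions of `s` and `t`
give two decompositions of the same signed measure, so the positive and negative parts can be
rearranged into an equality of finite positive measures, where the Bochner integral is additive
(`smIntegral_add`); real multiples rescale or swap the Jordan parts (`smIntegral_smul`).
Hence `I(ψ, φ) = ∫ f dE_{ψ,φ}` is a sesquilinear form on `D_s`. Whenever `I(·, φ)` is bounded,
the Hahn-Banach theorem and the Riesz representation theorem give a vector `L φ` representing it
(`exists_repr`). Density of `D_s` makes this vector unique, and linearity of `L`, uniqueness and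
the comparison with the operator on `W` all follow from that. For real `f`, symmetry of `L` is the
Hermitian symmetry `I(φ, ψ) = conj I(ψ, φ)`, which comes from polarizing the positivity of `E`
(`PSFM.re_swap`, `PSFM.im_swap`).
-/

open MeasureTheory ComplexConjugate Filter
open scoped ComplexInnerProductSpace ENNReal NNReal

/-- Integral of a complex-valued function with respect to a signed measure, defined via the
Jordan decomposition. -/
noncomputable def smIntegral {Ω : Type*} [MeasurableSpace Ω] (s : SignedMeasure Ω)
    (f : Ω → ℂ) : ℂ :=
  (∫ ω, f ω ∂s.toJordanDecomposition.posPart) - ∫ ω, f ω ∂s.toJordanDecomposition.negPart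

/-- The total variation control measure of a complex measure (the sum of the total variations
of the real and imaginary parts; a function is integrable for this measure iff it is integrable
for the total variation measure `|ν|`, and for a positive measure it coincides with it). -/
noncomputable def cmVariation {Ω : Type*} [MeasurableSpace Ω] (ν : ComplexMeasure Ω) :
    Measure Ω :=
  (ComplexMeasure.re ν).totalVariation + (ComplexMeasure.im ν).totalVariation

/-- `f` is integrable with respect to the complex measure `ν`, i.e. `∫ |f| d|ν| < ∞`. -/
def CMIntegrable {Ω : Type*} [MeasurableSpace Ω] (ν : ComplexMeasure Ω) (f : Ω → ℂ) : Prop :=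
  Integrable f (cmVariation ν)

/-- The integral `∫ f dν` of a complex function with respect to a complex measure, via the
Jordan decompositions of the real and imaginary parts of `ν`. -/
noncomputable def cmIntegral {Ω : Type*} [MeasurableSpace Ω] (ν : ComplexMeasure Ω)
    (f : Ω → ℂ) : ℂ :=
  smIntegral (ComplexMeasure.re ν) f + Complex.I * smIntegral (ComplexMeasure.im ν) f

/-- The complex measure `X ↦ ⟨y, μ(X)⟩` associated with a Hilbert space valued vector
measure `μ` and a vector `y`. -/
noncomputable def vmInner {Ω : Type*} [MeasurableSpace Ω] {H : Type*} [NormedAddCommGroup H]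
    [InnerProductSpace ℂ H] (μ : VectorMeasure Ω H) (y : H) : ComplexMeasure Ω :=
  μ.mapRange (innerSL ℂ y).toLinearMap.toAddMonoidHom (innerSL ℂ y).continuous

/-- A positive sesquilinear form valued measure with form domain `V`:
`cm ψ φ` is the complex measure `E_{ψ,φ} : X ↦ [E(X)](ψ,φ)` for `ψ φ : V`. -/
structure PSFM (Ω : Type*) [MeasurableSpace Ω] {H : Type*} [NormedAddCommGroup H]
    [InnerProductSpace ℂ H] (V : Submodule ℂ H) where
  cm : V → V → MeasureTheory.ComplexMeasure Ω
  add_left : ∀ (ψ₁ ψ₂ φ : V), cm (ψ₁ + ψ₂) φ = cm ψ₁ φ + cm ψ₂ φ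
  smul_left : ∀ (c : ℂ) (ψ φ : V), cm (c • ψ) φ = (starRingEnd ℂ c) • cm ψ φ
  add_right : ∀ (ψ φ₁ φ₂ : V), cm ψ (φ₁ + φ₂) = cm ψ φ₁ + cm ψ φ₂
  smul_right : ∀ (c : ℂ) (ψ φ : V), cm ψ (c • φ) = c • cm ψ φ
  pos : ∀ (φ : V) (X : Set Ω), MeasurableSet X → 0 ≤ (cm φ φ X).re ∧ (cm φ φ X).im = 0

theorem integrable_posPart_negPart {Ω : Type*} [MeasurableSpace Ω] {s : SignedMeasure Ω}
    {f : Ω → ℂ} (h : Integrable f s.totalVariation) :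
    Integrable f s.toJordanDecomposition.posPart ∧
      Integrable f s.toJordanDecomposition.negPart :=
  integrable_add_measure.1 h

theorem smIntegral_add {Ω : Type*} [MeasurableSpace Ω] {s t : SignedMeasure Ω} {f : Ω → ℂ}
    (hs : Integrable f s.totalVariation) (ht : Integrable f t.totalVariation)
    (hst : Integrable f (s + t).totalVariation) :
    smIntegral (s + t) f = smIntegral s f + smIntegral t f := by
  obtain ⟨hsp, hsn⟩ := integrable_posPart_negPart hs
  obtain ⟨htp, htn⟩ := integrable_posPart_negPart ht
  obtain ⟨hp, hn⟩ := integrable_posPart_negPart hst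
  have e1 := s.toSignedMeasure_toJordanDecomposition
  have e2 := t.toSignedMeasure_toJordanDecomposition
  have e3 := (s + t).toSignedMeasure_toJordanDecomposition
  unfold smIntegral
  unfold JordanDecomposition.toSignedMeasure at e1 e2 e3
  generalize (s + t).toJordanDecomposition = j at *
  generalize s.toJordanDecomposition = js at *
  generalize t.toJordanDecomposition = jt at *
  have key : j.posPart + (js.negPart + jt.negPart) = j.negPart + (js.posPart + jt.posPart) := by
    rw [← Measure.toSignedMeasure_eq_toSignedMeasure_iff]
    simp only [Measure.toSignedMeasure_add]
    rw [← e1, ← e2] at e3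
    rw [sub_eq_iff_eq_add] at e3
    rw [e3]
    abel
  have h := congrArg (fun μ => ∫ ω, f ω ∂μ) key
  rw [integral_add_measure hp (hsn.add_measure htn), integral_add_measure hsn htn,
    integral_add_measure hn (hsp.add_measure htp), integral_add_measure hsp htp] at h
  linear_combination h

theorem smIntegral_neg {Ω : Type*} [MeasurableSpace Ω] (s : SignedMeasure Ω) (f : Ω → ℂ) :
    smIntegral (-s) f = -smIntegral s f := by
  simp [smIntegral, SignedMeasure.toJordanDecomposition_neg]

theorem smIntegral_smul {Ω : Type*} [MeasurableSpace Ω] (r : ℝ) (s : SignedMeasure Ω)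
    (f : Ω → ℂ) : smIntegral (r • s) f = r * smIntegral s f := by
  unfold smIntegral
  rw [SignedMeasure.toJordanDecomposition_smul_real]
  rcases le_or_gt 0 r with hr | hr
  · rw [JordanDecomposition.real_smul_posPart_nonneg _ _ hr,
      JordanDecomposition.real_smul_negPart_nonneg _ _ hr, integral_smul_nnreal_measure,
      integral_smul_nnreal_measure, NNReal.smul_def, NNReal.smul_def, Real.coe_toNNReal _ hr]
    simp only [Complex.real_smul]
    ring
  · rw [JordanDecomposition.real_smul_posPart_neg _ _ hr,
      JordanDecomposition.real_smul_negPart_neg _ _ hr, integral_smul_nnreal_measure,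
      integral_smul_nnreal_measure, NNReal.smul_def, NNReal.smul_def,
      Real.coe_toNNReal _ (neg_nonneg.2 hr.le)]
    simp only [Complex.real_smul]
    push_cast
    ring

theorem integrable_totalVariation_smul {Ω : Type*} [MeasurableSpace Ω] (r : ℝ)
    {s : SignedMeasure Ω} {f : Ω → ℂ} (h : Integrable f s.totalVariation) :
    Integrable f (r • s).totalVariation := by
  obtain ⟨hp, hn⟩ := integrable_posPart_negPart h
  unfold SignedMeasure.totalVariation
  rw [SignedMeasure.toJordanDecomposition_smul_real]
  rcases le_or_gt 0 r with hr | hr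
  · rw [JordanDecomposition.real_smul_posPart_nonneg _ _ hr,
      JordanDecomposition.real_smul_negPart_nonneg _ _ hr]
    exact hp.smul_measure_nnreal.add_measure hn.smul_measure_nnreal
  · rw [JordanDecomposition.real_smul_posPart_neg _ _ hr,
      JordanDecomposition.real_smul_negPart_neg _ _ hr]
    exact hn.smul_measure_nnreal.add_measure hp.smul_measure_nnreal

theorem CMIntegrable.re_im {Ω : Type*} [MeasurableSpace Ω] {ν : ComplexMeasure Ω} {f : Ω → ℂ}
    (h : CMIntegrable ν f) :
    Integrable f (ComplexMeasure.re ν).totalVariation ∧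
      Integrable f (ComplexMeasure.im ν).totalVariation :=
  integrable_add_measure.1 h

theorem cmIntegral_add {Ω : Type*} [MeasurableSpace Ω] {μ ν : ComplexMeasure Ω} {f : Ω → ℂ}
    (hμ : CMIntegrable μ f) (hν : CMIntegrable ν f) (h : CMIntegrable (μ + ν) f) :
    cmIntegral (μ + ν) f = cmIntegral μ f + cmIntegral ν f := by
  have h' := h.re_im
  rw [map_add, map_add] at h'
  unfold cmIntegral
  rw [map_add, map_add, smIntegral_add hμ.re_im.1 hν.re_im.1 h'.1,
    smIntegral_add hμ.re_im.2 hν.re_im.2 h'.2]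
  ring

theorem cmIntegral_smul {Ω : Type*} [MeasurableSpace Ω] (c : ℂ) {ν : ComplexMeasure Ω}
    {f : Ω → ℂ} (hν : CMIntegrable ν f) (h : CMIntegrable (c • ν) f) :
    cmIntegral (c • ν) f = c * cmIntegral ν f := by
  have hre : ComplexMeasure.re (c • ν) =
      c.re • ComplexMeasure.re ν + (-c.im) • ComplexMeasure.im ν := by
    ext X hX
    change (c * ν X).re = c.re * (ν X).re + -c.im * (ν X).im
    rw [Complex.mul_re]
    ring
  have him : ComplexMeasure.im (c • ν) =
      c.re • ComplexMeasure.im ν + c.im • ComplexMeasure.re ν := by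
    ext X hX
    change (c * ν X).im = c.re * (ν X).im + c.im * (ν X).re
    exact Complex.mul_im _ _
  have h' := h.re_im
  rw [hre, him] at h'
  have ir := fun r => integrable_totalVariation_smul r hν.re_im.1
  have ii := fun r => integrable_totalVariation_smul r hν.re_im.2
  unfold cmIntegral
  rw [hre, him, smIntegral_add (ir _) (ii _) h'.1, smIntegral_add (ii _) (ir _) h'.2]
  simp only [smIntegral_smul]
  push_cast
  nth_rewrite 5 [← Complex.re_add_im c]
  linear_combination
    -(c.im : ℂ) * smIntegral (ComplexMeasure.im ν) f * Complex.I_sq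

/-- Integrating a real function against the conjugate measure conjugates the integral. -/
theorem cmIntegral_conj {Ω : Type*} [MeasurableSpace Ω] {μ ν : ComplexMeasure Ω} {f : Ω → ℂ}
    (hf : ∀ ω, (f ω).im = 0) (hre : ComplexMeasure.re μ = ComplexMeasure.re ν)
    (him : ComplexMeasure.im μ = -ComplexMeasure.im ν) :
    cmIntegral μ f = conj (cmIntegral ν f) := by
  have hconj : ∀ s : SignedMeasure Ω, conj (smIntegral s f) = smIntegral s f := by
    intro s
    unfold smIntegral
    rw [map_sub, ← integral_conj, ← integral_conj]
    simp only [fun ω => Complex.conj_eq_iff_im.2 (hf ω)]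
  unfold cmIntegral
  rw [hre, him, smIntegral_neg, map_add, map_mul, hconj, hconj, Complex.conj_I]
  ring

theorem PSFM.im_swap {Ω : Type*} [MeasurableSpace Ω] {H : Type*} [NormedAddCommGroup H]
    [InnerProductSpace ℂ H] {V : Submodule ℂ H} (E : PSFM Ω V) (ψ φ : V) :
    ComplexMeasure.im (E.cm φ ψ) = -ComplexMeasure.im (E.cm ψ φ) := by
  ext X hX
  have h := (E.pos (ψ + φ) X hX).2
  have h1 := (E.pos ψ X hX).2
  have h2 := (E.pos φ X hX).2
  simp only [E.add_left, E.add_right, _root_.add_apply, Complex.add_im] at h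
  change (E.cm φ ψ X).im = -(E.cm ψ φ X).im
  linarith

/-- The real part of `E_{ψ,φ}` is symmetric, since `E_{ψ+iφ,ψ+iφ}` is real. -/
theorem PSFM.re_swap {Ω : Type*} [MeasurableSpace Ω] {H : Type*} [NormedAddCommGroup H]
    [InnerProductSpace ℂ H] {V : Submodule ℂ H} (E : PSFM Ω V) (ψ φ : V) :
    ComplexMeasure.re (E.cm φ ψ) = ComplexMeasure.re (E.cm ψ φ) := by
  ext X hX
  have h := (E.pos (ψ + Complex.I • φ) X hX).2
  have h1 := (E.pos ψ X hX).2
  have h2 := (E.pos φ X hX).2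
  simp only [E.add_left, E.add_right, E.smul_left, E.smul_right, _root_.add_apply,
    _root_.smul_apply, smul_eq_mul, Complex.conj_I, Complex.add_im, Complex.mul_im,
    Complex.mul_re, Complex.neg_re, Complex.neg_im, Complex.I_re, Complex.I_im] at h
  change (E.cm φ ψ X).re = (E.cm ψ φ X).re
  linarith

/-- A bounded antilinear functional on a subspace of a Hilbert space is represented by a vector:
its conjugate extends to the whole space by the Hahn-Banach theorem, and the Riesz representation
theorem applies to the extension. -/
theorem exists_repr {H : Type*} [NormedAddCommGroup H] [InnerProductSpace ℂ H] [CompleteSpace H]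
    (D : Submodule ℂ H) (J : D → ℂ) (hadd : ∀ x y, J (x + y) = J x + J y)
    (hsmul : ∀ (c : ℂ) x, J (c • x) = conj c * J x)
    (C : ℝ) (hC : ∀ x : D, ‖J x‖ ≤ C * ‖x‖) :
    ∃ v : H, ∀ x : D, ⟪(x : H), v⟫ = J x := by
  let g : D →ₗ[ℂ] ℂ :=
    { toFun := fun x => conj (J x)
      map_add' := fun x y => by rw [hadd, map_add]
      map_smul' := fun c x => by simp [hsmul] }
  obtain ⟨G, hG, -⟩ := exists_extension_norm_eq D
    (g.mkContinuous C fun x => by simpa [g] using hC x)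
  refine ⟨(InnerProductSpace.toDual ℂ H).symm G, fun x => ?_⟩
  rw [← inner_conj_symm, InnerProductSpace.toDual_symm_apply, hG]
  simp [g]

theorem stmt_7 {Ω : Type*} [MeasurableSpace Ω] {H : Type*}
    [NormedAddCommGroup H] [InnerProductSpace ℂ H] [CompleteSpace H]
    {V : Submodule ℂ H} (hVdense : Dense (V : Set H))
    (E : PSFM Ω V) (f : Ω → ℂ) (hf : Measurable f)
    (Ds : Submodule ℂ H) (hsub : Ds ≤ V) (hdense : Dense (Ds : Set H))
    (hint : ∀ (ψ φ : H) (hψ : ψ ∈ Ds) (hφ : φ ∈ Ds),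
      CMIntegrable (E.cm ⟨ψ, hsub hψ⟩ ⟨φ, hsub hφ⟩) f) :
    -- `Q φ hφ` says that `φ` belongs to `D''`, i.e. `φ ∈ Ds` and the functional
    -- `Ds ∋ ψ ↦ ∫ f dE_{ψ,φ}` is bounded
    let Q : (φ : H) → φ ∈ Ds → Prop := fun φ hφ =>
      ∃ C : ℝ, ∀ ψ (hψ : ψ ∈ Ds),
        ‖cmIntegral (E.cm ⟨ψ, hsub hψ⟩ ⟨φ, hsub hφ⟩) f‖ ≤ C * ‖ψ‖
    -- D'' is a linear subspace of H
    (∃ S : Submodule ℂ H, (S : Set H) = {φ : H | ∃ hφ : φ ∈ Ds, Q φ hφ}) ∧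
    -- there is a unique linear operator L'' : D'' → H with the defining property
    ∃ L : H → H,
      (∀ (φ : H) (hφ : φ ∈ Ds), Q φ hφ → ∀ ψ (hψ : ψ ∈ Ds),
        ⟪ψ, L φ⟫ = cmIntegral (E.cm ⟨ψ, hsub hψ⟩ ⟨φ, hsub hφ⟩) f) ∧
      (∀ (φ₁ φ₂ : H) (h₁ : φ₁ ∈ Ds) (h₂ : φ₂ ∈ Ds), Q φ₁ h₁ → Q φ₂ h₂ →
        L (φ₁ + φ₂) = L φ₁ + L φ₂) ∧
      (∀ (c : ℂ) (φ : H) (hφ : φ ∈ Ds), Q φ hφ → L (c • φ) = c • L φ) ∧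
      (∀ L' : H → H,
        (∀ (φ : H) (hφ : φ ∈ Ds), Q φ hφ → ∀ ψ (hψ : ψ ∈ Ds),
          ⟪ψ, L' φ⟫ = cmIntegral (E.cm ⟨ψ, hsub hψ⟩ ⟨φ, hsub hφ⟩) f) →
        ∀ (φ : H) (hφ : φ ∈ Ds), Q φ hφ → L' φ = L φ) ∧
      -- D'' ⊆ W, i.e. every φ ∈ D'' satisfies the defining conditions of W
      (∀ (φ : H) (hφ : φ ∈ Ds), Q φ hφ →
        (∀ ψ (hψ : ψ ∈ Ds), CMIntegrable (E.cm ⟨ψ, hsub hψ⟩ ⟨φ, hsub hφ⟩) f) ∧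
        ∃ C : ℝ, ∀ ψ (hψ : ψ ∈ Ds),
          ‖cmIntegral (E.cm ⟨ψ, hsub hψ⟩ ⟨φ, hsub hφ⟩) f‖ ≤ C * ‖ψ‖) ∧
      -- L'' is the restriction to D'' of the operator L_{D_s} defined on W by the same formula
      (∀ LW : H → H,
        (∀ (φ : H) (hφ : φ ∈ V),
          ((∀ ψ (hψ : ψ ∈ Ds), CMIntegrable (E.cm ⟨ψ, hsub hψ⟩ ⟨φ, hφ⟩) f) ∧
            ∃ C : ℝ, ∀ ψ (hψ : ψ ∈ Ds),
              ‖cmIntegral (E.cm ⟨ψ, hsub hψ⟩ ⟨φ, hφ⟩) f‖ ≤ C * ‖ψ‖) →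
          ∀ ψ (hψ : ψ ∈ Ds), ⟪ψ, LW φ⟫ = cmIntegral (E.cm ⟨ψ, hsub hψ⟩ ⟨φ, hφ⟩) f) →
        ∀ (φ : H) (hφ : φ ∈ Ds), Q φ hφ → LW φ = L φ) ∧
      -- if f is real valued then L'' is symmetric
      ((∀ ω, (f ω).im = 0) →
        ∀ (ψ φ : H) (hψ : ψ ∈ Ds) (hφ : φ ∈ Ds), Q ψ hψ → Q φ hφ →
          ⟪L ψ, φ⟫ = ⟪ψ, L φ⟫) := by
  intro Q
  -- `I ψ φ` is the sesquilinear form `∫ f dE_{ψ,φ}` on `Ds`.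
  let I : Ds → Ds → ℂ := fun ψ φ => cmIntegral (E.cm ⟨ψ, hsub ψ.2⟩ ⟨φ, hsub φ.2⟩) f
  have I_add_left : ∀ ψ₁ ψ₂ φ, I (ψ₁ + ψ₂) φ = I ψ₁ φ + I ψ₂ φ := by
    intro ψ₁ ψ₂ φ
    have e := E.add_left ⟨ψ₁, hsub ψ₁.2⟩ ⟨ψ₂, hsub ψ₂.2⟩ ⟨φ, hsub φ.2⟩
    have h := hint (ψ₁ + ψ₂) φ (ψ₁ + ψ₂).2 φ.2
    exact (congrArg (cmIntegral · f) e).trans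
      (cmIntegral_add (hint _ _ ψ₁.2 φ.2) (hint _ _ ψ₂.2 φ.2) (e ▸ h))
  have I_add_right : ∀ ψ φ₁ φ₂, I ψ (φ₁ + φ₂) = I ψ φ₁ + I ψ φ₂ := by
    intro ψ φ₁ φ₂
    have e := E.add_right ⟨ψ, hsub ψ.2⟩ ⟨φ₁, hsub φ₁.2⟩ ⟨φ₂, hsub φ₂.2⟩
    have h := hint ψ (φ₁ + φ₂) ψ.2 (φ₁ + φ₂).2
    exact (congrArg (cmIntegral · f) e).trans
      (cmIntegral_add (hint _ _ ψ.2 φ₁.2) (hint _ _ ψ.2 φ₂.2) (e ▸ h))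
  have I_smul_left : ∀ (c : ℂ) ψ φ, I (c • ψ) φ = conj c * I ψ φ := by
    intro c ψ φ
    have e := E.smul_left c ⟨ψ, hsub ψ.2⟩ ⟨φ, hsub φ.2⟩
    have h := hint (c • ψ : Ds) φ (c • ψ).2 φ.2
    exact (congrArg (cmIntegral · f) e).trans (cmIntegral_smul _ (hint _ _ ψ.2 φ.2) (e ▸ h))
  have I_smul_right : ∀ (c : ℂ) ψ φ, I ψ (c • φ) = c * I ψ φ := by
    intro c ψ φ
    have e := E.smul_right c ⟨ψ, hsub ψ.2⟩ ⟨φ, hsub φ.2⟩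
    have h := hint ψ (c • φ : Ds) ψ.2 (c • φ).2
    exact (congrArg (cmIntegral · f) e).trans (cmIntegral_smul _ (hint _ _ ψ.2 φ.2) (e ▸ h))
  have Q_add : ∀ (φ₁ φ₂ : H) (h₁ : φ₁ ∈ Ds) (h₂ : φ₂ ∈ Ds), Q φ₁ h₁ → Q φ₂ h₂ →
      Q (φ₁ + φ₂) (Ds.add_mem h₁ h₂) := by
    rintro φ₁ φ₂ h₁ h₂ ⟨C₁, hC₁⟩ ⟨C₂, hC₂⟩
    refine ⟨C₁ + C₂, fun ψ hψ => ?_⟩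
    change ‖I ⟨ψ, hψ⟩ (⟨φ₁, h₁⟩ + ⟨φ₂, h₂⟩)‖ ≤ _
    rw [I_add_right, add_mul]
    exact (norm_add_le _ _).trans (add_le_add (hC₁ ψ hψ) (hC₂ ψ hψ))
  have Q_smul : ∀ (c : ℂ) (φ : H) (hφ : φ ∈ Ds), Q φ hφ → Q (c • φ) (Ds.smul_mem c hφ) := by
    rintro c φ hφ ⟨C, hC⟩
    refine ⟨‖c‖ * C, fun ψ hψ => ?_⟩
    change ‖I ⟨ψ, hψ⟩ (c • ⟨φ, hφ⟩)‖ ≤ _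
    rw [I_smul_right, norm_mul, mul_assoc]
    exact mul_le_mul_of_nonneg_left (hC ψ hψ) (norm_nonneg c)
  have Q_zero : Q 0 Ds.zero_mem := by
    refine ⟨0, fun ψ hψ => ?_⟩
    have h : I ⟨ψ, hψ⟩ 0 = 0 := by simpa using I_smul_right 0 ⟨ψ, hψ⟩ 0
    change ‖I ⟨ψ, hψ⟩ 0‖ ≤ _
    rw [h, norm_zero, zero_mul]
  have hrepr : ∀ φ : H, ∃ v : H, ∀ hφ : φ ∈ Ds, Q φ hφ → ∀ ψ (hψ : ψ ∈ Ds),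
      ⟪ψ, v⟫ = cmIntegral (E.cm ⟨ψ, hsub hψ⟩ ⟨φ, hsub hφ⟩) f := by
    intro φ
    by_cases h : ∃ hφ : φ ∈ Ds, Q φ hφ
    · obtain ⟨hφ, C, hC⟩ := h
      obtain ⟨v, hv⟩ := exists_repr Ds (fun ψ => I ψ ⟨φ, hφ⟩)
        (fun x y => I_add_left x y _) (fun c x => I_smul_left c x _) C (fun x => hC x x.2)
      exact ⟨v, fun _ _ ψ hψ => hv ⟨ψ, hψ⟩⟩
    · exact ⟨0, fun hφ hQ => (h ⟨hφ, hQ⟩).elim⟩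
  choose L hL using hrepr
  refine ⟨⟨{ carrier := {φ : H | ∃ hφ : φ ∈ Ds, Q φ hφ}
             add_mem' := ?_, zero_mem' := ⟨Ds.zero_mem, Q_zero⟩, smul_mem' := ?_ }, rfl⟩,
    L, hL, ?_, ?_, ?_, ?_, ?_, ?_⟩
  · rintro a b ⟨ha, hQa⟩ ⟨hb, hQb⟩
    exact ⟨Ds.add_mem ha hb, Q_add a b ha hb hQa hQb⟩
  · rintro c a ⟨ha, hQa⟩
    exact ⟨Ds.smul_mem c ha, Q_smul c a ha hQa⟩
  · intro φ₁ φ₂ h₁ h₂ hQ₁ hQ₂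
    refine hdense.eq_of_inner_right ℂ fun ψ hψ => ?_
    rw [inner_add_right, hL _ (Ds.add_mem h₁ h₂) (Q_add _ _ h₁ h₂ hQ₁ hQ₂) ψ hψ, hL _ h₁ hQ₁ ψ hψ,
      hL _ h₂ hQ₂ ψ hψ]
    exact I_add_right ⟨ψ, hψ⟩ ⟨φ₁, h₁⟩ ⟨φ₂, h₂⟩
  · intro c φ hφ hQ
    refine hdense.eq_of_inner_right ℂ fun ψ hψ => ?_
    rw [inner_smul_right, hL _ (Ds.smul_mem c hφ) (Q_smul c _ hφ hQ) ψ hψ, hL _ hφ hQ ψ hψ]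
    exact I_smul_right c ⟨ψ, hψ⟩ ⟨φ, hφ⟩
  · intro L' hL' φ hφ hQ
    exact hdense.eq_of_inner_right ℂ fun ψ hψ => by
      rw [hL' φ hφ hQ ψ hψ, hL φ hφ hQ ψ hψ]
  · intro φ hφ hQ
    exact ⟨fun ψ hψ => hint ψ φ hψ hφ, hQ⟩
  · intro LW hLW φ hφ hQ
    exact hdense.eq_of_inner_right ℂ fun ψ hψ => by
      rw [hLW φ (hsub hφ) ⟨fun ψ hψ => hint ψ φ hψ hφ, hQ⟩ ψ hψ, hL φ hφ hQ ψ hψ]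
  · intro hreal ψ φ hψ hφ hQψ hQφ
    rw [← inner_conj_symm, hL ψ hψ hQψ φ hφ, hL φ hφ hQφ ψ hψ]
    exact (cmIntegral_conj hreal (E.re_swap _ _) (E.im_swap _ _)).symm
end

section
/- Let E be a positive sesquilinear form valued measure with form domain 𝒱 ⊆ H and f : Ω → ℂ a measurable function. Then F̃ := {φ ∈ 𝒱 : ∫ |f| dE_{φ,φ} < ∞} is a linear subspace of 𝒱; f is E_{ψ,φ}-integrable for all ψ, φ ∈ F̃; and every linear subspace D ⊆ 𝒱 with the property that f is E_{ψ,φ}-integrable for all ψ, φ ∈ D satisfies D ⊆ F̃. Thus F̃ is the largest linear subspace D of 𝒱 with D × D contained in the set of pairs (ψ,φ) for which f is E_{ψ,φ}-integrable. -/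
/-!
Positivity of the form `E(X)` on `ψ ± φ` and `ψ ± iφ` gives, for every measurable `X`,
`|E_{ψ,φ}(X)| ≤ E_{ψ,ψ}(X) + E_{φ,φ}(X)` (`norm_cm_le`). The right-hand side is a positive measure,
so the variation of `E_{ψ,φ}` is controlled by those of `E_{ψ,ψ}` and `E_{φ,φ}`, and integrability
of `f` passes from the two diagonal measures to `E_{ψ,φ}` (`cmIntegrable_of_diag`). Closure of the
candidate domain under addition follows by expanding `E_{ψ+φ,ψ+φ}` sesquilinearly, and maximality
is the case `ψ = φ` of the hypothesis on `D`.
-/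

open MeasureTheory ComplexConjugate Filter
open scoped ComplexInnerProductSpace ENNReal NNReal

section Helpers

variable {Ω : Type*} [MeasurableSpace Ω] {H : Type*} [NormedAddCommGroup H]
  [InnerProductSpace ℂ H] {V : Submodule ℂ H}

theorem enorm_le_cmVariation (ν : ComplexMeasure Ω) (X : Set Ω) :
    ‖ν X‖ₑ ≤ cmVariation ν X := by
  have h1 := SignedMeasure.enorm_le_totalVariation (ComplexMeasure.re ν) X
  have h2 := SignedMeasure.enorm_le_totalVariation (ComplexMeasure.im ν) X
  have h : ‖ν X‖ₑ ≤ ‖(ν X).re‖ₑ + ‖(ν X).im‖ₑ := by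
    rw [← ofReal_norm, ← ofReal_norm, ← ofReal_norm,
      ← ENNReal.ofReal_add (norm_nonneg _) (norm_nonneg _)]
    exact ENNReal.ofReal_le_ofReal (Complex.norm_le_abs_re_add_abs_im _)
  exact h.trans (add_le_add h1 h2)

/-- A complex measure dominated setwise by a positive measure inherits its integrable
functions. -/
theorem cmIntegrable_of_enorm_le {ν : ComplexMeasure Ω} {m : Measure Ω} {f : Ω → ℂ}
    (h : ∀ X, MeasurableSet X → ‖ν X‖ₑ ≤ m X) (hf : Integrable f m) : CMIntegrable ν f := by
  have h1 : (ComplexMeasure.re ν).totalVariation ≤ m := by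
    rw [SignedMeasure.totalVariation_eq_variation]
    refine VectorMeasure.variation_le_of_forall_enorm_le fun X hX => le_trans ?_ (h X hX)
    exact enorm_le_iff_norm_le.2 (Complex.abs_re_le_norm (ν X))
  have h2 : (ComplexMeasure.im ν).totalVariation ≤ m := by
    rw [SignedMeasure.totalVariation_eq_variation]
    refine VectorMeasure.variation_le_of_forall_enorm_le fun X hX => le_trans ?_ (h X hX)
    exact enorm_le_iff_norm_le.2 (Complex.abs_im_le_norm (ν X))
  exact (hf.mono_measure h1).add_measure (hf.mono_measure h2)

theorem CMIntegrable.add {ν₁ ν₂ : ComplexMeasure Ω} {f : Ω → ℂ}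
    (h₁ : CMIntegrable ν₁ f) (h₂ : CMIntegrable ν₂ f) : CMIntegrable (ν₁ + ν₂) f := by
  refine cmIntegrable_of_enorm_le (fun X _ => ?_) (Integrable.add_measure h₁ h₂)
  exact (enorm_add_le _ _).trans
    (add_le_add (enorm_le_cmVariation ν₁ X) (enorm_le_cmVariation ν₂ X))

theorem CMIntegrable.smul {ν : ComplexMeasure Ω} {f : Ω → ℂ}
    (h : CMIntegrable ν f) (c : ℂ) : CMIntegrable (c • ν) f := by
  refine cmIntegrable_of_enorm_le (fun X _ => ?_)
    (Integrable.smul_measure h (c := ‖c‖ₑ) enorm_ne_top)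
  rw [smul_apply, enorm_smul, Measure.smul_apply, smul_eq_mul]
  gcongr
  exact enorm_le_cmVariation ν X

/-- The arithmetic-mean form of the Cauchy–Schwarz inequality for the forms `E(X)`. -/
theorem norm_cm_le (E : PSFM Ω V) (ψ φ : V) {X : Set Ω} (hX : MeasurableSet X) :
    ‖E.cm ψ φ X‖ ≤ (E.cm ψ ψ X).re + (E.cm φ φ X).re := by
  have expand : ∀ c : ℂ, E.cm (ψ + c • φ) (ψ + c • φ) X =
      E.cm ψ ψ X + c * E.cm ψ φ X + conj c * E.cm φ ψ X + conj c * (c * E.cm φ φ X) := by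
    intro c
    simp only [E.add_left, E.add_right, E.smul_left, E.smul_right, add_apply,
      smul_apply, smul_eq_mul]
    ring
  have h1 := E.pos (ψ + (1 : ℂ) • φ) X hX
  have h2 := E.pos (ψ + (-1 : ℂ) • φ) X hX
  have h3 := E.pos (ψ + Complex.I • φ) X hX
  have h4 := E.pos (ψ + (-Complex.I) • φ) X hX
  have hp := E.pos ψ X hX
  have hq := E.pos φ X hX
  rw [expand] at h1 h2 h3 h4
  generalize E.cm ψ φ X = a at *
  generalize E.cm φ ψ X = b at *
  generalize E.cm ψ ψ X = p at *
  generalize E.cm φ φ X = q at *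
  simp at h1 h2 h3 h4
  -- The two real bounds are `|Re (a + b)| ≤ p + q` and `|Im (a - b)| ≤ p + q`; the vanishing
  -- imaginary parts say `b = conj a`, so each coordinate of `a` is at most
  -- `(p + q) / 2` in absolute value.
  have hr : |a.re| ≤ (p.re + q.re) / 2 := abs_le.2 ⟨by linarith, by linarith⟩
  have hi : |a.im| ≤ (p.re + q.re) / 2 := abs_le.2 ⟨by linarith, by linarith⟩
  linarith [Complex.norm_le_abs_re_add_abs_im a]

theorem cmIntegrable_of_diag (E : PSFM Ω V) {f : Ω → ℂ} {ψ φ : V}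
    (hψ : CMIntegrable (E.cm ψ ψ) f) (hφ : CMIntegrable (E.cm φ φ) f) :
    CMIntegrable (E.cm ψ φ) f := by
  refine cmIntegrable_of_enorm_le (fun X hX => ?_) (Integrable.add_measure hψ hφ)
  refine le_trans ?_ (add_le_add (enorm_le_cmVariation _ X) (enorm_le_cmVariation _ X))
  rw [← ofReal_norm, ← ofReal_norm, ← ofReal_norm,
    ← ENNReal.ofReal_add (norm_nonneg _) (norm_nonneg _)]
  exact ENNReal.ofReal_le_ofReal ((norm_cm_le E ψ φ hX).trans
    (add_le_add (Complex.re_le_norm _) (Complex.re_le_norm _)))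

theorem cmIntegrable_diag_add (E : PSFM Ω V) {f : Ω → ℂ} {ψ φ : V}
    (hψ : CMIntegrable (E.cm ψ ψ) f) (hφ : CMIntegrable (E.cm φ φ) f) :
    CMIntegrable (E.cm (ψ + φ) (ψ + φ)) f := by
  rw [E.add_left, E.add_right, E.add_right]
  exact (hψ.add (cmIntegrable_of_diag E hψ hφ)).add ((cmIntegrable_of_diag E hφ hψ).add hφ)

theorem cmIntegrable_diag_smul (E : PSFM Ω V) {f : Ω → ℂ} {φ : V} (c : ℂ)
    (hφ : CMIntegrable (E.cm φ φ) f) : CMIntegrable (E.cm (c • φ) (c • φ)) f := by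
  rw [E.smul_left, E.smul_right]
  exact (hφ.smul c).smul _

/-- The set of `φ` in the form domain with `f` integrable for `E_{φ,φ}`, as a subspace of `V`. -/
def diagDomain (E : PSFM Ω V) (f : Ω → ℂ) : Submodule ℂ V where
  carrier := {φ | CMIntegrable (E.cm φ φ) f}
  add_mem' := fun hψ hφ => cmIntegrable_diag_add E hψ hφ
  zero_mem' := by
    have h0 : E.cm 0 0 = 0 := by simpa using E.add_left 0 0 0
    rw [Set.mem_ofPred_eq, h0]
    exact cmIntegrable_of_enorm_le (m := 0) (by simp) integrable_zero_measure
  smul_mem' := fun c _ hφ => cmIntegrable_diag_smul E c hφ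

end Helpers

theorem stmt_9 {Ω : Type*} [MeasurableSpace Ω] {H : Type*}
    [NormedAddCommGroup H] [InnerProductSpace ℂ H] [CompleteSpace H]
    {V : Submodule ℂ H} (hVdense : Dense (V : Set H))
    (E : PSFM Ω V) (f : Ω → ℂ) (hf : Measurable f) :
    let Ft : Set H := {φ : H | ∃ hφ : φ ∈ V, CMIntegrable (E.cm ⟨φ, hφ⟩ ⟨φ, hφ⟩) f}
    (∃ S : Submodule ℂ H, (S : Set H) = Ft) ∧
    (∀ (ψ φ : H) (hψ : ψ ∈ V) (hφ : φ ∈ V), ψ ∈ Ft → φ ∈ Ft →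
      CMIntegrable (E.cm ⟨ψ, hψ⟩ ⟨φ, hφ⟩) f) ∧
    (∀ (D : Submodule ℂ H) (hDV : D ≤ V),
      (∀ (ψ φ : H) (hψ : ψ ∈ D) (hφ : φ ∈ D),
        CMIntegrable (E.cm ⟨ψ, hDV hψ⟩ ⟨φ, hDV hφ⟩) f) →
      (D : Set H) ⊆ Ft) := by
  intro Ft
  refine ⟨⟨(diagDomain E f).map V.subtype, ?_⟩, ?_, ?_⟩
  · ext φ
    constructor
    · rintro ⟨⟨φ, hφ⟩, iφ, rfl⟩
      exact ⟨hφ, iφ⟩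
    · rintro ⟨hφ, iφ⟩
      exact ⟨⟨φ, hφ⟩, iφ, rfl⟩
  · rintro ψ φ hψ hφ ⟨_, iψ⟩ ⟨_, iφ⟩
    exact cmIntegrable_of_diag E iψ iφ
  · intro D hDV h φ hφ
    exact ⟨hDV hφ, h φ φ hφ hφ⟩
end

section
/- Let E : 𝒜 → L(H) be a spectral measure and f : Ω → ℂ a measurable function. Set F̃ := {φ ∈ H : ∫ |f| dE_{φ,φ} < ∞} and S̃ := {φ ∈ H : ∫ |f|² dE_{φ,φ} < ∞} (f is E_{ψ,φ}-integrable for all ψ, φ ∈ F̃). Then S̃ = {φ ∈ H : f is E_{ψ,φ}-integrable for every ψ ∈ H} = {φ ∈ F̃ : the functional F̃ ∋ ψ ↦ ∫ f dE_{ψ,φ} is bounded}; moreover, for every φ ∈ S̃ there is a unique vector v ∈ H with ⟨ψ, v⟩ = ∫ f dE_{ψ,φ} for all ψ ∈ H. In other words, for a spectral measure the square-integrability operator integral, the maximal strong operator integral, and the largest symmetric weak operator integral all coincide. -/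
/-!
Fix `φ` and let `μ = E_{φ,φ}`. Since the values of `E` are projections, finite additivity forces
`E X * E Y = E (X ∩ Y)` (`POVM.IsProj.mul_eq`). Hence the indicators `1_X` in `L²(μ)` and the vectors
`E X φ` in `H` have the same Gram matrix, and there is an isometry `T : L²(μ) → H` with
`T 1_X = E X φ` (`POVM.IsProj.exists_isometry`). Consequently `E_{ψ,φ}` has the `μ`-density
`conj (T* ψ)`, which is square integrable, and integrability and integrals with respect to
`E_{ψ,φ}` become statements about products with elements of `L²(μ)`:

* If `f ∈ L²(μ)`, then `f` is `E_{ψ,φ}`-integrable for every `ψ`, and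
  `∫ f dE_{ψ,φ} = ⟪T* ψ, f⟫ = ⟪ψ, T f⟫`; in particular the functional is bounded, and `T f` is the
  vector representing it.
* If `f` is `E_{ψ,φ}`-integrable for every `ψ`, then taking `ψ = T u` shows that `conj u * f` is
  `μ`-integrable for every `u ∈ L²(μ)`, and Banach–Steinhaus gives `f ∈ L²(μ)`.
* If the functional is bounded by `C` on the form domain, let `f_n` be the truncation of `f` to
  `Y = {‖f‖ ≤ n}`. The vector `E Y (T f_n)` lies in the form domain and has norm at most `‖f_n‖`,
  while the functional takes the value `‖f_n‖²` on it. So `‖f_n‖ ≤ |C|`, and Fatou's lemma gives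
  `f ∈ L²(μ)`.
-/


open MeasureTheory ComplexConjugate Filter
open scoped ComplexInnerProductSpace ENNReal NNReal

/-- A positive operator (valued) measure: `op X` are the operators `E(X)`, and `cm ψ φ` is the
complex measure `E_{ψ,φ} : X ↦ ⟨ψ, E(X)φ⟩`. -/
structure POVM (Ω : Type*) [MeasurableSpace Ω] (H : Type*) [NormedAddCommGroup H]
    [InnerProductSpace ℂ H] where
  op : Set Ω → H →L[ℂ] H
  cm : H → H → MeasureTheory.ComplexMeasure Ω
  cm_apply : ∀ (ψ φ : H) (X : Set Ω), MeasurableSet X → cm ψ φ X = ⟪ψ, op X φ⟫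
  pos : ∀ (φ : H) (X : Set Ω), MeasurableSet X →
    0 ≤ (⟪φ, op X φ⟫ : ℂ).re ∧ (⟪φ, op X φ⟫ : ℂ).im = 0

/-! ### Complex measures with a density -/

section Density

variable {Ω : Type*} [MeasurableSpace Ω]

/-- The Jordan decomposition of `g dμ` is given by the positive and negative parts of `g`. -/
theorem jordan_of_density {μ : Measure Ω} {s : SignedMeasure Ω} {g : Ω → ℝ} (hg : Measurable g)
    (hgi : Integrable g μ) (hs : ∀ X, MeasurableSet X → s X = ∫ ω in X, g ω ∂μ) :
    s.toJordanDecomposition.posPart = μ.withDensity (fun ω => ENNReal.ofReal (g ω)) ∧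
    s.toJordanDecomposition.negPart = μ.withDensity (fun ω => ENNReal.ofReal (-g ω)) := by
  have hs' : s = 0 + μ.withDensityᵥ g := by
    ext X hX
    rw [zero_add, withDensityᵥ_apply hgi hX, hs X hX]
  have h := SignedMeasure.toJordanDecomposition_eq_of_eq_add_withDensity hg hgi
    VectorMeasure.MutuallySingular.zero_left hs'
  rw [h]
  simp [SignedMeasure.toJordanDecomposition_zero]

theorem integrable_ofReal_density_iff {μ : Measure Ω} {g : Ω → ℝ} (hg : Measurable g)
    {f : Ω → ℂ} :
    Integrable f (μ.withDensity (fun ω => ENNReal.ofReal (g ω))) ↔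
      Integrable (fun ω => ((max (g ω) 0 : ℝ) : ℂ) * f ω) μ := by
  rw [integrable_withDensity_iff_integrable_smul' hg.ennreal_ofReal (by simp)]
  simp [ENNReal.toReal_ofReal']

theorem smIntegrable_iff {μ : Measure Ω} {s : SignedMeasure Ω} {g : Ω → ℝ} (hg : Measurable g)
    (hgi : Integrable g μ) (hs : ∀ X, MeasurableSet X → s X = ∫ ω in X, g ω ∂μ)
    {f : Ω → ℂ} (hf : Measurable f) :
    Integrable f s.totalVariation ↔ Integrable (fun ω => (g ω : ℂ) * f ω) μ := by
  obtain ⟨hp, hn⟩ := jordan_of_density hg hgi hs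
  rw [SignedMeasure.totalVariation, integrable_add_measure, hp, hn,
    integrable_ofReal_density_iff hg, integrable_ofReal_density_iff (g := fun ω => -g ω) hg.neg]
  constructor
  · rintro ⟨h1, h2⟩
    refine (h1.sub h2).congr (ae_of_all _ fun ω => ?_)
    simp only [Pi.sub_apply]
    rw [← sub_mul, ← Complex.ofReal_sub, max_zero_sub_eq_self]
  · intro h
    constructor
    · refine h.mono (by fun_prop) (ae_of_all _ fun ω => ?_)
      simp only [norm_mul, Complex.norm_real, Real.norm_eq_abs]
      refine mul_le_mul_of_nonneg_right ?_ (norm_nonneg _)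
      rw [abs_of_nonneg (le_max_right _ _)]
      exact max_le (le_abs_self _) (abs_nonneg _)
    · refine h.mono (by fun_prop) (ae_of_all _ fun ω => ?_)
      simp only [norm_mul, Complex.norm_real, Real.norm_eq_abs]
      refine mul_le_mul_of_nonneg_right ?_ (norm_nonneg _)
      rw [abs_of_nonneg (le_max_right _ _)]
      exact max_le (neg_le_abs _) (abs_nonneg _)

theorem smIntegral_eq {μ : Measure Ω} {s : SignedMeasure Ω} {g : Ω → ℝ} (hg : Measurable g)
    (hgi : Integrable g μ) (hs : ∀ X, MeasurableSet X → s X = ∫ ω in X, g ω ∂μ)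
    {f : Ω → ℂ} (hint : Integrable f s.totalVariation) :
    smIntegral s f = ∫ ω, (g ω : ℂ) * f ω ∂μ := by
  obtain ⟨hp, hn⟩ := jordan_of_density hg hgi hs
  rw [SignedMeasure.totalVariation, integrable_add_measure, hp, hn,
    integrable_ofReal_density_iff hg, integrable_ofReal_density_iff (g := fun ω => -g ω) hg.neg] at hint
  rw [smIntegral, hp, hn, integral_withDensity_eq_integral_toReal_smul hg.ennreal_ofReal (by simp),
    integral_withDensity_eq_integral_toReal_smul (f := fun ω => ENNReal.ofReal (-g ω))
      hg.neg.ennreal_ofReal (by simp)]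
  simp only [ENNReal.toReal_ofReal', Complex.real_smul]
  rw [← integral_sub hint.1 hint.2]
  congr 1 with ω
  rw [← sub_mul, ← Complex.ofReal_sub, max_zero_sub_eq_self]

/-- `g` is a measurable `μ`-integrable density of the complex measure `ν`. -/
structure HasCDensity (ν : ComplexMeasure Ω) (μ : Measure Ω) (g : Ω → ℂ) : Prop where
  meas : Measurable g
  integrable : Integrable g μ
  apply_eq : ∀ X, MeasurableSet X → ν X = ∫ ω in X, g ω ∂μ

theorem HasCDensity.re_apply {ν : ComplexMeasure Ω} {μ : Measure Ω} {g : Ω → ℂ}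
    (h : HasCDensity ν μ g) (X : Set Ω) (hX : MeasurableSet X) :
    ComplexMeasure.re ν X = ∫ ω in X, (g ω).re ∂μ := by
  have h1 : ComplexMeasure.re ν X = (ν X).re := rfl
  rw [h1, h.apply_eq X hX]
  exact (integral_re h.integrable.integrableOn).symm

theorem HasCDensity.im_apply {ν : ComplexMeasure Ω} {μ : Measure Ω} {g : Ω → ℂ}
    (h : HasCDensity ν μ g) (X : Set Ω) (hX : MeasurableSet X) :
    ComplexMeasure.im ν X = ∫ ω in X, (g ω).im ∂μ := by
  have h1 : ComplexMeasure.im ν X = (ν X).im := rfl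
  rw [h1, h.apply_eq X hX]
  exact (integral_im h.integrable.integrableOn).symm

theorem HasCDensity.cmIntegrable_iff {ν : ComplexMeasure Ω} {μ : Measure Ω} {g : Ω → ℂ}
    (h : HasCDensity ν μ g) {f : Ω → ℂ} (hf : Measurable f) :
    CMIntegrable ν f ↔ Integrable (fun ω => g ω * f ω) μ := by
  have hm := h.meas
  rw [CMIntegrable, cmVariation, integrable_add_measure,
    smIntegrable_iff (by fun_prop) h.integrable.re h.re_apply hf,
    smIntegrable_iff (by fun_prop) h.integrable.im h.im_apply hf]
  constructor
  · rintro ⟨h1, h2⟩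
    refine (h1.add (h2.const_mul Complex.I)).congr (ae_of_all _ fun ω => ?_)
    simp only [Pi.add_apply, RCLike.re_to_complex, RCLike.im_to_complex]
    conv_rhs => rw [← Complex.re_add_im (g ω)]
    ring
  · intro h
    constructor
    · refine h.mono (by fun_prop) (ae_of_all _ fun ω => ?_)
      simp only [norm_mul, Complex.norm_real, Real.norm_eq_abs]
      gcongr
      exact Complex.abs_re_le_norm _
    · refine h.mono (by fun_prop) (ae_of_all _ fun ω => ?_)
      simp only [norm_mul, Complex.norm_real, Real.norm_eq_abs]
      gcongr
      exact Complex.abs_im_le_norm _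

theorem HasCDensity.cmIntegral_eq {ν : ComplexMeasure Ω} {μ : Measure Ω} {g : Ω → ℂ}
    (h : HasCDensity ν μ g) {f : Ω → ℂ} (hf : Measurable f) (hint : CMIntegrable ν f) :
    cmIntegral ν f = ∫ ω, g ω * f ω ∂μ := by
  have hm := h.meas
  rw [CMIntegrable, cmVariation, integrable_add_measure] at hint
  have h1 := (smIntegrable_iff (by fun_prop) h.integrable.re h.re_apply hf).1 hint.1
  have h2 := (smIntegrable_iff (by fun_prop) h.integrable.im h.im_apply hf).1 hint.2
  rw [cmIntegral, smIntegral_eq (by fun_prop) h.integrable.re h.re_apply hint.1,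
    smIntegral_eq (by fun_prop) h.integrable.im h.im_apply hint.2,
    ← integral_const_mul, ← integral_add h1 (h2.const_mul _)]
  congr 1 with ω
  conv_rhs => rw [← Complex.re_add_im (g ω)]
  simp only [RCLike.re_to_complex, RCLike.im_to_complex]
  ring

end Density

/-! ### Square-integrability by truncation -/

section L2

variable {Ω : Type*} [MeasurableSpace Ω]

/-- The truncation of `f` to the set where `‖f‖ ≤ n`. -/
noncomputable def truncate (f : Ω → ℂ) (n : ℕ) : Ω → ℂ := {ω | ‖f ω‖ ≤ n}.indicator f

theorem measurableSet_norm_le {f : Ω → ℂ} (hf : Measurable f) (n : ℕ) :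
    MeasurableSet {ω | ‖f ω‖ ≤ n} := measurableSet_le hf.norm measurable_const

theorem measurable_truncate {f : Ω → ℂ} (hf : Measurable f) (n : ℕ) :
    Measurable (truncate f n) := hf.indicator (measurableSet_norm_le hf n)

theorem norm_truncate_le {Ω : Type*} (f : Ω → ℂ) (n : ℕ) (ω : Ω) : ‖truncate f n ω‖ ≤ n := by
  by_cases h : ‖f ω‖ ≤ n <;> simp [truncate, Set.indicator, h]

theorem memLp_truncate {μ : Measure Ω} [IsFiniteMeasure μ] {f : Ω → ℂ} (hf : Measurable f)
    (n : ℕ) : MemLp (truncate f n) 2 μ :=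
  MemLp.of_bound (measurable_truncate hf n).aestronglyMeasurable n
    (ae_of_all _ (norm_truncate_le f n))

/-- By Fatou's lemma, a uniform `L²` bound on the truncations passes to the function. -/
theorem memLp_of_truncate_bound {μ : Measure Ω} [IsFiniteMeasure μ] {f : Ω → ℂ}
    (hf : Measurable f) {C : ℝ} (h : ∀ n, ‖(memLp_truncate (μ := μ) hf n).toLp _‖ ≤ C) :
    MemLp f 2 μ := by
  refine ⟨hf.aestronglyMeasurable, ?_⟩
  have hlim : ∀ ω, Tendsto (fun n => truncate f n ω) atTop (nhds (f ω)) := by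
    intro ω
    refine tendsto_const_nhds.congr' ?_
    filter_upwards [eventually_ge_atTop ⌈‖f ω‖⌉₊] with n hn
    have : ‖f ω‖ ≤ n := (Nat.le_ceil _).trans (by exact_mod_cast hn)
    simp [truncate, Set.indicator, this]
  refine lt_of_le_of_lt (Lp.eLpNorm_lim_le_liminf_eLpNorm
    (fun n => (measurable_truncate hf n).aestronglyMeasurable) f (ae_of_all _ hlim))
    (lt_of_le_of_lt (b := ENNReal.ofReal C) ?_ ENNReal.ofReal_lt_top)
  refine (liminf_le_liminf (v := fun _ => ENNReal.ofReal C) (Eventually.of_forall fun n => ?_)).trans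
    (by simp)
  have := h n
  rw [Lp.norm_toLp] at this
  exact (ENNReal.le_ofReal_iff_toReal_le (memLp_truncate hf n).2.ne
    ((ENNReal.toReal_nonneg).trans this)).2 this

/-- A function whose product with every `L²` function is integrable lies in `L²`
(Banach–Steinhaus applied to the functionals given by the truncations). -/
theorem memLp_of_forall_integrable {μ : Measure Ω} [IsFiniteMeasure μ] {f : Ω → ℂ}
    (hf : Measurable f)
    (h : ∀ u : Lp ℂ 2 μ, Integrable (fun ω => conj (u ω) * f ω) μ) : MemLp f 2 μ := by
  obtain ⟨C, hC⟩ := banach_steinhaus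
    (g := fun n : ℕ => innerSL ℂ ((memLp_truncate (μ := μ) hf n).toLp _)) (fun u => by
    refine ⟨∫ ω, ‖conj (u ω) * f ω‖ ∂μ, fun n => ?_⟩
    rw [innerSL_apply_apply, L2.inner_def]
    refine norm_integral_le_of_norm_le (h u).norm ?_
    filter_upwards [(memLp_truncate (μ := μ) hf n).coeFn_toLp] with ω hω
    rw [hω]
    refine (norm_inner_le_norm _ _).trans ?_
    rw [norm_mul, RCLike.norm_conj, mul_comm]
    gcongr
    by_cases hb : ‖f ω‖ ≤ n <;> simp [truncate, Set.indicator, hb])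
  refine memLp_of_truncate_bound hf (C := C) fun n => ?_
  simpa only [innerSL_apply_norm] using hC n

/-- Linear combinations of indicator functions are dense in `L²`. -/
theorem denseRange_indicators (μ : Measure Ω) [IsFiniteMeasure μ] :
    DenseRange (Finsupp.linearCombination ℂ
      (fun X : {X : Set Ω // MeasurableSet X} =>
        indicatorConstLp 2 X.2 (measure_ne_top μ X.1) (1 : ℂ))) := by
  set A := Finsupp.linearCombination ℂ
      (fun X : {X : Set Ω // MeasurableSet X} =>
        indicatorConstLp 2 X.2 (measure_ne_top μ X.1) (1 : ℂ)) with hA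
  intro u
  rw [← LinearMap.coe_range, ← Submodule.topologicalClosure_coe, SetLike.mem_coe]
  refine Lp.induction (by simp) (motive := fun u => u ∈ (LinearMap.range A).topologicalClosure)
    ?_ ?_ ?_ u
  · intro c X hX hμ
    refine Submodule.le_topologicalClosure _ ⟨Finsupp.single ⟨X, hX⟩ c, ?_⟩
    rw [hA, Finsupp.linearCombination_single, Lp.simpleFunc.coe_indicatorConst]
    simp_rw [indicatorConstLp, ← MemLp.toLp_const_smul]
    congr 1
    ext ω
    by_cases h : ω ∈ X <;> simp [h]
  · intro f g hf hg _ h1 h2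
    exact Submodule.add_mem _ h1 h2
  · exact Submodule.isClosed_topologicalClosure _

end L2

/-! ### Isometries from Gram matrices -/

section Isometry

variable {ι F H : Type*} [NormedAddCommGroup F] [InnerProductSpace ℂ F]
  [NormedAddCommGroup H] [InnerProductSpace ℂ H] [CompleteSpace H]

/-- Two families with the same Gram matrix, the first one total, are intertwined by an isometry. -/
theorem exists_isometry_of_gram (v : ι → F) (w : ι → H)
    (hgram : ∀ i j, ⟪v i, v j⟫ = ⟪w i, w j⟫)
    (hdense : DenseRange (Finsupp.linearCombination ℂ v)) :
    ∃ T : F →ₗᵢ[ℂ] H, ∀ i, T (v i) = w i := by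
  set A := Finsupp.linearCombination ℂ v with hA
  set B := Finsupp.linearCombination ℂ w with hB
  have hinner : ∀ c, ⟪A c, A c⟫ = ⟪B c, B c⟫ := by
    intro c
    simp only [hA, hB, Finsupp.linearCombination_apply, Finsupp.sum, sum_inner, inner_sum,
      inner_smul_left, inner_smul_right, hgram]
  have hnorm : ∀ c, ‖B c‖ = ‖A c‖ := by
    intro c
    rw [@norm_eq_sqrt_re_inner ℂ, @norm_eq_sqrt_re_inner ℂ _ _ _ _ (A c), hinner]
  have hex : ∃ C : ℝ, ∀ c, ‖B c‖ ≤ C * ‖A c‖ := ⟨1, fun c => by rw [hnorm, one_mul]⟩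
  have hext := LinearMap.extendOfNorm_eq hdense hex
  refine ⟨⟨(B.extendOfNorm A).toLinearMap, fun u => ?_⟩, fun i => ?_⟩
  · refine hdense.induction_on (p := fun u => ‖(B.extendOfNorm A) u‖ = ‖u‖) u
      (isClosed_eq (by fun_prop) (by fun_prop)) fun c => ?_
    rw [hext, hnorm]
  · have := hext (Finsupp.single i 1)
    simpa [hA, hB] using this

end Isometry

/-! ### The spectral isometry of a vector -/

section Spectral

variable {Ω : Type*} [MeasurableSpace Ω] {H : Type*}
    [NormedAddCommGroup H] [InnerProductSpace ℂ H]

theorem POVM.op_union (E : POVM Ω H) {X Y : Set Ω} (hX : MeasurableSet X) (hY : MeasurableSet Y)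
    (h : Disjoint X Y) : E.op (X ∪ Y) = E.op X + E.op Y := by
  ext φ
  refine ext_inner_left ℂ fun ψ => ?_
  rw [add_apply, inner_add_right, ← E.cm_apply ψ φ _ (hX.union hY),
    ← E.cm_apply ψ φ _ hX, ← E.cm_apply ψ φ _ hY, VectorMeasure.of_union h hX hY]

/-- The diagonal measure `E_{φ,φ}` as a finite positive measure. -/
theorem POVM.exists_measure (E : POVM Ω H) (φ : H) :
    ∃ μ : Measure Ω, IsFiniteMeasure μ ∧
      ∀ X, MeasurableSet X → (μ.real X : ℂ) = ⟪φ, E.op X φ⟫ := by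
  set s : SignedMeasure Ω := ComplexMeasure.re (E.cm φ φ)
  have hsX : ∀ X, MeasurableSet X → s X = (⟪φ, E.op X φ⟫ : ℂ).re := fun X hX =>
    congrArg Complex.re (E.cm_apply φ φ X hX)
  have hs : 0 ≤[Set.univ] s := by
    refine VectorMeasure.restrict_le_restrict_of_subset_le _ _ fun X hX _ => ?_
    rw [hsX X hX]
    exact (E.pos φ X hX).1
  refine ⟨s.toMeasureOfZeroLE Set.univ MeasurableSet.univ hs, inferInstance, fun X hX => ?_⟩
  rw [SignedMeasure.toMeasureOfZeroLE_real_apply _ _ _ hX, Set.univ_inter, hsX X hX]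
  apply Complex.ext
  · simp
  · simp [(E.pos φ X hX).2]

/-- `T : L²(μ) → H` is the isometry `g ↦ ∫ g dE φ`, where `μ` is the diagonal measure of
`φ`; it is determined by its values on indicator functions. -/
structure IsSpectralIsometry (E : POVM Ω H) (φ : H) (μ : Measure Ω) [IsFiniteMeasure μ]
    (T : Lp ℂ 2 μ →ₗᵢ[ℂ] H) : Prop where
  real_apply : ∀ X, MeasurableSet X → (μ.real X : ℂ) = ⟪φ, E.op X φ⟫
  map_indicator : ∀ X (hX : MeasurableSet X),
    T (indicatorConstLp 2 hX (measure_ne_top μ X) (1 : ℂ)) = E.op X φ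

namespace IsSpectralIsometry

variable {E : POVM Ω H} {φ : H} {μ : Measure Ω} [IsFiniteMeasure μ] {T : Lp ℂ 2 μ →ₗᵢ[ℂ] H}

theorem density_diag (h : IsSpectralIsometry E φ μ T) :
    HasCDensity (E.cm φ φ) μ (fun _ => 1) where
  meas := measurable_const
  integrable := integrable_const _
  apply_eq X hX := by simp [E.cm_apply φ φ X hX, ← h.real_apply X hX]

/-- A measure `E_{ψ,φ}` has density `conj u` for any `u ∈ L²` pairing with the indicators
as `ψ` pairs with the vectors `E X φ`. -/
theorem density_of_inner (u : Lp ℂ 2 μ) (ψ : H)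
    (hu : ∀ X (hX : MeasurableSet X),
      ⟪u, indicatorConstLp 2 hX (measure_ne_top μ X) (1 : ℂ)⟫ = ⟪ψ, E.op X φ⟫) :
    HasCDensity (E.cm ψ φ) μ (fun ω => conj (u ω)) where
  meas := by
    have := (Lp.stronglyMeasurable u).measurable
    fun_prop
  integrable := by
    have := (Lp.memLp u).integrable (by norm_num)
    exact (Complex.conjLIE.integrable_comp_iff).2 this
  apply_eq X hX := by
    rw [E.cm_apply ψ φ X hX, ← hu X hX, ← inner_conj_symm, L2.inner_indicatorConstLp_one,
      integral_conj]

theorem density_map (h : IsSpectralIsometry E φ μ T) (u : Lp ℂ 2 μ) :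
    HasCDensity (E.cm (T u) φ) μ (fun ω => conj (u ω)) := by
  refine density_of_inner _ _ fun X hX => ?_
  rw [← h.map_indicator X hX, T.inner_map_map]

theorem cmIntegrable_diag_iff (h : IsSpectralIsometry E φ μ T) {f : Ω → ℂ} (hf : Measurable f) :
    CMIntegrable (E.cm φ φ) f ↔ Integrable f μ := by
  simpa using h.density_diag.cmIntegrable_iff hf

end IsSpectralIsometry

variable [CompleteSpace H]

/-- All values of the POVM on measurable sets are orthogonal projections. -/
def POVM.IsProj (E : POVM Ω H) : Prop := ∀ X : Set Ω, MeasurableSet X →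
      ContinuousLinearMap.adjoint (E.op X) = E.op X ∧ (E.op X).comp (E.op X) = E.op X

/-- If `P`, `Q` and `P + Q` are idempotent, then `PQ = 0`: this gives `E X * E Y = 0` for
disjoint `X` and `Y`. -/
theorem POVM.IsProj.mul_disjoint {E : POVM Ω H} (hE : E.IsProj) {X Y : Set Ω}
    (hX : MeasurableSet X) (hY : MeasurableSet Y) (h : Disjoint X Y) : E.op X * E.op Y = 0 := by
  have h1 : E.op X * E.op X = E.op X := (hE X hX).2
  have h2 : E.op Y * E.op Y = E.op Y := (hE Y hY).2
  have h3 : E.op (X ∪ Y) * E.op (X ∪ Y) = E.op (X ∪ Y) := (hE _ (hX.union hY)).2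
  rw [E.op_union hX hY h] at h3
  generalize E.op X = P at *
  generalize E.op Y = Q at *
  have h4 : P * Q + Q * P = 0 := by
    have : (P + Q) * (P + Q) = P * P + Q * Q + (P * Q + Q * P) := by noncomm_ring
    rw [this, h1, h2] at h3
    simpa using h3
  have h5 : P * Q + P * Q * P = 0 := by
    have : P * (P * Q + Q * P) = (P * P) * Q + P * Q * P := by noncomm_ring
    rw [h4, h1, mul_zero] at this
    exact this.symm
  have h6 : P * Q * P + Q * P = 0 := by
    have : (P * Q + Q * P) * P = P * Q * P + Q * (P * P) := by noncomm_ring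
    rw [h4, h1, zero_mul] at this
    exact this.symm
  have h7 : (2 : ℂ) • (P * Q) = 0 := by
    have : (2 : ℂ) • (P * Q) = (P * Q + P * Q * P) - (P * Q * P + Q * P) + (P * Q + Q * P) := by
      rw [two_smul]; abel
    rw [this, h4, h5, h6]; simp
  exact (smul_eq_zero.1 h7).resolve_left two_ne_zero

theorem POVM.IsProj.mul_eq {E : POVM Ω H} (hE : E.IsProj) {X Y : Set Ω}
    (hX : MeasurableSet X) (hY : MeasurableSet Y) : E.op X * E.op Y = E.op (X ∩ Y) := by
  have hXe : E.op X = E.op (X ∩ Y) + E.op (X \ Y) := by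
    rw [← E.op_union (hX.inter hY) (hX.diff hY)
      (Set.disjoint_sdiff_right.mono_left Set.inter_subset_right), Set.inter_union_sdiff]
  have hYe : E.op Y = E.op (X ∩ Y) + E.op (Y \ X) := by
    rw [← E.op_union (hX.inter hY) (hY.diff hX)
      (Set.disjoint_sdiff_right.mono_left Set.inter_subset_left), Set.inter_comm,
      Set.inter_union_sdiff]
  have hi : E.op (X ∩ Y) * E.op (X ∩ Y) = E.op (X ∩ Y) := (hE _ (hX.inter hY)).2
  rw [hXe, hYe, add_mul, mul_add, mul_add, hi,
    hE.mul_disjoint (hX.inter hY) (hY.diff hX)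
      (Set.disjoint_sdiff_right.mono_left Set.inter_subset_left),
    hE.mul_disjoint (hX.diff hY) (hX.inter hY)
      (Set.disjoint_sdiff_left.mono_right Set.inter_subset_right),
    hE.mul_disjoint (hX.diff hY) (hY.diff hX)
      (Set.disjoint_sdiff_left.mono_right Set.sdiff_subset)]
  simp

theorem POVM.IsProj.inner_op {E : POVM Ω H} (hE : E.IsProj) {X : Set Ω}
    (hX : MeasurableSet X) (ψ φ : H) : ⟪E.op X ψ, φ⟫ = ⟪ψ, E.op X φ⟫ := by
  conv_rhs => rw [← (hE X hX).1]
  rw [ContinuousLinearMap.adjoint_inner_right]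

theorem POVM.IsProj.inner_op_op {E : POVM Ω H} (hE : E.IsProj) {X Y : Set Ω}
    (hX : MeasurableSet X) (hY : MeasurableSet Y) (ψ φ : H) :
    ⟪E.op X ψ, E.op Y φ⟫ = ⟪ψ, E.op (X ∩ Y) φ⟫ := by
  rw [hE.inner_op hX, ← hE.mul_eq hX hY]; rfl

theorem POVM.IsProj.exists_isometry {E : POVM Ω H} (hE : E.IsProj) (φ : H) :
    ∃ (μ : Measure Ω) (_ : IsFiniteMeasure μ) (T : Lp ℂ 2 μ →ₗᵢ[ℂ] H),
      IsSpectralIsometry E φ μ T := by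
  obtain ⟨μ, hμ, hμX⟩ := E.exists_measure φ
  obtain ⟨T, hT⟩ := exists_isometry_of_gram
    (fun X : {X : Set Ω // MeasurableSet X} =>
        indicatorConstLp 2 X.2 (measure_ne_top μ X.1) (1 : ℂ))
    (fun X => E.op X.1 φ) (fun X Y => by
      rw [hE.inner_op_op X.2 Y.2, ← hμX _ (X.2.inter Y.2),
        L2.inner_indicatorConstLp_indicatorConstLp]
      simp) (denseRange_indicators μ)
  exact ⟨μ, hμ, T, hμX, fun X hX => hT ⟨X, hX⟩⟩

namespace IsSpectralIsometry

variable {E : POVM Ω H} {φ : H} {μ : Measure Ω} [IsFiniteMeasure μ] {T : Lp ℂ 2 μ →ₗᵢ[ℂ] H}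

theorem density_adjoint (h : IsSpectralIsometry E φ μ T) (ψ : H) :
    HasCDensity (E.cm ψ φ) μ
      (fun ω => conj ((ContinuousLinearMap.adjoint T.toContinuousLinearMap ψ) ω)) := by
  refine density_of_inner _ _ fun X hX => ?_
  rw [ContinuousLinearMap.adjoint_inner_left]
  exact congrArg _ (h.map_indicator X hX)

theorem cmIntegrable_sq_iff (h : IsSpectralIsometry E φ μ T) {f : Ω → ℂ} (hf : Measurable f) :
    CMIntegrable (E.cm φ φ) (fun ω => ((‖f ω‖ ^ 2 : ℝ) : ℂ)) ↔ MemLp f 2 μ := by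
  rw [h.cmIntegrable_diag_iff (by fun_prop), memLp_two_iff_integrable_sq_norm
    hf.aestronglyMeasurable]
  exact ⟨fun h => h.re, fun h => h.ofReal⟩

theorem cmIntegrable_of_memLp (h : IsSpectralIsometry E φ μ T) {f : Ω → ℂ} (hf : Measurable f)
    (hL : MemLp f 2 μ) (ψ : H) : CMIntegrable (E.cm ψ φ) f := by
  rw [(h.density_adjoint ψ).cmIntegrable_iff hf]
  exact (Lp.memLp _).star.integrable_mul hL

/-- The operator integral applied to `φ` is `T f`. -/
theorem inner_map (h : IsSpectralIsometry E φ μ T) {f : Ω → ℂ} (hf : Measurable f)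
    (hL : MemLp f 2 μ) (ψ : H) : ⟪ψ, T (hL.toLp f)⟫ = cmIntegral (E.cm ψ φ) f := by
  rw [(h.density_adjoint ψ).cmIntegral_eq hf (h.cmIntegrable_of_memLp hf hL ψ)]
  have h1 := ContinuousLinearMap.adjoint_inner_left T.toContinuousLinearMap (hL.toLp f) ψ
  rw [LinearIsometry.coe_toContinuousLinearMap] at h1
  rw [← h1, L2.inner_def]
  refine integral_congr_ae ?_
  filter_upwards [hL.coeFn_toLp] with ω hω
  rw [hω, RCLike.inner_apply, mul_comm]

theorem memLp_of_forall_cmIntegrable (h : IsSpectralIsometry E φ μ T) {f : Ω → ℂ}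
    (hf : Measurable f) (hall : ∀ ψ, CMIntegrable (E.cm ψ φ) f) : MemLp f 2 μ :=
  memLp_of_forall_integrable hf fun u => ((h.density_map u).cmIntegrable_iff hf).1 (hall (T u))

end IsSpectralIsometry

/-- Vectors in the range of `E {‖f‖ ≤ n}` have `f` bounded almost everywhere for their diagonal
measure. -/
theorem POVM.IsProj.cmIntegrable_op {E : POVM Ω H} (hE : E.IsProj) {f : Ω → ℂ}
    (hf : Measurable f) (n : ℕ) (χ : H) :
    CMIntegrable (E.cm (E.op {ω | ‖f ω‖ ≤ n} χ) (E.op {ω | ‖f ω‖ ≤ n} χ)) f := by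
  set Y := {ω | ‖f ω‖ ≤ n} with hYdef
  have hY : MeasurableSet Y := measurableSet_norm_le hf n
  obtain ⟨μ, hμ, T, h⟩ := hE.exists_isometry (E.op Y χ)
  rw [h.cmIntegrable_diag_iff hf]
  have h0 : μ.real Yᶜ = 0 := by
    have h1 := h.real_apply Yᶜ hY.compl
    have h2 : E.op Yᶜ (E.op Y χ) = 0 :=
      congrArg (fun A : H →L[ℂ] H => A χ) (hE.mul_disjoint hY.compl hY disjoint_compl_left)
    rw [h2, inner_zero_right] at h1
    exact_mod_cast h1
  refine Integrable.of_bound hf.aestronglyMeasurable n ?_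
  rw [measureReal_eq_zero_iff] at h0
  exact h0

/-- If the functional `ψ ↦ ∫ f dE_{ψ,φ}` is bounded on the form domain, testing it on the vectors
`E {‖f‖ ≤ n} T(f_n)`, with `f_n` the truncations of `f`, bounds the norms of the `f_n`. -/
theorem IsSpectralIsometry.memLp_of_bounded {E : POVM Ω H} (hE : E.IsProj) {φ : H} {μ : Measure Ω}
    [IsFiniteMeasure μ] {T : Lp ℂ 2 μ →ₗᵢ[ℂ] H} (h : IsSpectralIsometry E φ μ T) {f : Ω → ℂ}
    (hf : Measurable f) {C : ℝ}
    (hC : ∀ ψ, CMIntegrable (E.cm ψ ψ) f → ‖cmIntegral (E.cm ψ φ) f‖ ≤ C * ‖ψ‖) :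
    MemLp f 2 μ := by
  refine memLp_of_truncate_bound hf (C := |C|) fun n => ?_
  set Y := {ω | ‖f ω‖ ≤ n} with hYdef
  have hY : MeasurableSet Y := measurableSet_norm_le hf n
  have hmem := memLp_truncate (μ := μ) hf n
  set u := hmem.toLp _ with hu
  set ψ := E.op Y (T u) with hψ
  have hψnorm : ‖ψ‖ ≤ ‖u‖ := by
    have h1 : ‖ψ‖ * ‖ψ‖ ≤ ‖T u‖ * ‖ψ‖ := by
      have h2 : ⟪ψ, ψ⟫ = ⟪T u, ψ⟫ := by rw [hψ, hE.inner_op_op hY hY, Set.inter_self]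
      rw [← inner_self_eq_norm_mul_norm (𝕜 := ℂ) ψ, h2]
      exact re_inner_le_norm _ _
    rw [T.norm_map] at h1
    by_contra! hlt
    nlinarith [norm_nonneg u]
  have hae : ∀ᵐ ω ∂μ, u ω = truncate f n ω := hmem.coeFn_toLp
  have hdens : HasCDensity (E.cm ψ φ) μ (fun ω => conj (u ω)) := by
    refine IsSpectralIsometry.density_of_inner _ _ fun X hX => ?_
    rw [hψ, hE.inner_op_op hY hX, ← h.map_indicator _ (hY.inter hX), T.inner_map_map,
      ← inner_conj_symm, ← inner_conj_symm _ (indicatorConstLp 2 (hY.inter hX) _ _),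
      L2.inner_indicatorConstLp_one, L2.inner_indicatorConstLp_one]
    congr 1
    rw [Set.inter_comm, ← setIntegral_indicator hY]
    refine integral_congr_ae (ae_restrict_of_ae ?_)
    filter_upwards [hae] with ω hω
    by_cases hωY : ω ∈ Y
    · simp [hωY]
    · simp [hωY, hω, truncate, ← hYdef]
  have hprod : ∀ᵐ ω ∂μ, conj (u ω) * f ω = conj (u ω) * u ω := by
    filter_upwards [hae] with ω hω
    by_cases hωY : ω ∈ Y
    · simp [hωY, hω, truncate, ← hYdef]
    · simp [hωY, hω, truncate, ← hYdef]
  have hint : CMIntegrable (E.cm ψ φ) f := by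
    rw [hdens.cmIntegrable_iff hf, integrable_congr hprod]
    exact (Lp.memLp _).star.integrable_mul (Lp.memLp u)
  have hval : cmIntegral (E.cm ψ φ) f = ((‖u‖ ^ 2 : ℝ) : ℂ) := by
    rw [hdens.cmIntegral_eq hf hint, integral_congr_ae hprod]
    have := inner_self_eq_norm_sq_to_K (𝕜 := ℂ) u
    rw [L2.inner_def] at this
    simp only [RCLike.inner_apply] at this
    simp_rw [mul_comm (conj _)]
    rw [this]
    simp
  have hb := hC ψ (hE.cmIntegrable_op hf n (T u))
  rw [hval, Complex.norm_real, Real.norm_eq_abs, abs_of_nonneg (by positivity)] at hb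
  have hb' : ‖u‖ ^ 2 ≤ |C| * ‖u‖ := by
    refine hb.trans ?_
    gcongr
    exact le_abs_self _
  by_contra! hlt
  nlinarith [abs_nonneg C]

end Spectral

theorem stmt_10 {Ω : Type*} [MeasurableSpace Ω] {H : Type*}
    [NormedAddCommGroup H] [InnerProductSpace ℂ H] [CompleteSpace H]
    (E : POVM Ω H)
    (hproj : ∀ X : Set Ω, MeasurableSet X →
      ContinuousLinearMap.adjoint (E.op X) = E.op X ∧ (E.op X).comp (E.op X) = E.op X)
    (hnorm : E.op Set.univ = 1) (f : Ω → ℂ) (hf : Measurable f) :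
    let Ft : Set H := {φ | CMIntegrable (E.cm φ φ) f}
    let St : Set H := {φ | CMIntegrable (E.cm φ φ) (fun ω => ((‖f ω‖ ^ 2 : ℝ) : ℂ))}
    St = {φ : H | ∀ ψ : H, CMIntegrable (E.cm ψ φ) f} ∧
    St = {φ ∈ Ft | ∃ C : ℝ, ∀ ψ ∈ Ft, ‖cmIntegral (E.cm ψ φ) f‖ ≤ C * ‖ψ‖} ∧
    ∀ φ ∈ St, ∃! v : H, ∀ ψ : H, ⟪ψ, v⟫ = cmIntegral (E.cm ψ φ) f := by
  have hE : E.IsProj := hproj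
  intro Ft St
  refine ⟨?_, ?_, ?_⟩
  · ext φ
    obtain ⟨μ, hμ, T, h⟩ := hE.exists_isometry φ
    refine (h.cmIntegrable_sq_iff hf).trans ⟨fun hL ψ => h.cmIntegrable_of_memLp hf hL ψ,
      fun hall => h.memLp_of_forall_cmIntegrable hf hall⟩
  · ext φ
    obtain ⟨μ, hμ, T, h⟩ := hE.exists_isometry φ
    refine (h.cmIntegrable_sq_iff hf).trans ⟨fun hL =>
      ⟨h.cmIntegrable_of_memLp hf hL φ, ‖T (hL.toLp f)‖, fun ψ _ => ?_⟩, ?_⟩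
    · rw [← h.inner_map hf hL ψ, mul_comm]
      exact norm_inner_le_norm _ _
    · rintro ⟨-, C, hC⟩
      exact h.memLp_of_bounded hE hf hC
  · intro φ hφ
    obtain ⟨μ, hμ, T, h⟩ := hE.exists_isometry φ
    have hL := (h.cmIntegrable_sq_iff hf).1 hφ
    refine ⟨T (hL.toLp f), h.inner_map hf hL, fun w hw => ext_inner_left ℂ fun ψ => ?_⟩
    rw [hw ψ, h.inner_map hf hL ψ]
end
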